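/- arXiv:2202.12878 — 5 statements merged into one kernel-verified Lean document; each statement's English description precedes it below -/
import Mathlib

section
/- Let (F, q_F) be an object of _{(W_i)}Set^{(𝒱I)ᵒᵖ}. Then the map which sends the class [ε]_{𝒢_{(F,q_F)}} of ε ∈ Hom_{𝒱I}(V, W_i) to ε^*φ_i ∈ F(V) is well defined and is a bijection from ⊔_{i∈I} Hom_{𝒱I}(V, W_i)/∼_{𝒢_{(F,q_F)}} to F(V), naturally in V ∈ 𝒱I; in particular F is isomorphic to ⊔_{i∈I} Hom_{𝒱I}(−,W_i)/∼_{𝒢_{(F,q_F)}} compatibly with the surjections from ⊔_{i∈I} Hom_{𝒱I}(−,W_i). -/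
set_option maxHeartbeats 1000000

namespace Paper

/-- A finite-dimensional vector space over `𝔽_p = ZMod p`: an object of the
categories `𝒱^f` and `𝒱I`. -/
structure FDVec (p : ℕ) [Fact p.Prime] : Type 1 where
  carrier : Type
  [addCommGroup' : AddCommGroup carrier]
  [module' : Module (ZMod p) carrier]
  [finiteDimensional' : FiniteDimensional (ZMod p) carrier]

attribute [instance] FDVec.addCommGroup' FDVec.module' FDVec.finiteDimensional'

instance (p : ℕ) [Fact p.Prime] : CoeSort (FDVec p) Type := ⟨FDVec.carrier⟩

abbrev FDVec.of (p : ℕ) [Fact p.Prime] (X : Type) [AddCommGroup X] [Module (ZMod p) X]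
    [FiniteDimensional (ZMod p) X] : FDVec p := ⟨X⟩

variable {p : ℕ} [Fact p.Prime]

/-- The object of `𝒱I` determined by a subspace. -/
abbrev subFD {W : FDVec p} (U : Submodule (ZMod p) W) : FDVec p := FDVec.of p U

theorem comp_injective {A B C : Type} [AddCommGroup A] [Module (ZMod p) A]
    [AddCommGroup B] [Module (ZMod p) B] [AddCommGroup C] [Module (ZMod p) C]
    (f : A →ₗ[ZMod p] B) (g : B →ₗ[ZMod p] C)
    (hf : Function.Injective f) (hg : Function.Injective g) :
    Function.Injective (g ∘ₗ f) := fun _ _ h => hf (hg h)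

theorem linearMap_id_injective (V : Type) [AddCommGroup V] [Module (ZMod p) V] :
    Function.Injective (LinearMap.id : V →ₗ[ZMod p] V) := fun _ _ h => h

theorem equiv_toLinearMap_injective {A B : Type} [AddCommGroup A] [Module (ZMod p) A]
    [AddCommGroup B] [Module (ZMod p) B] (e : A ≃ₗ[ZMod p] B) :
    Function.Injective (e.toLinearMap : A →ₗ[ZMod p] B) := e.injective

/-- A presheaf on the category `𝒱I` of finite-dimensional `𝔽_p`-vector spaces
and injective linear maps: a contravariant functor to `Set`. -/
structure VIPresheaf (p : ℕ) [Fact p.Prime] where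
  obj : FDVec p → Type
  map : ∀ {V W : FDVec p} (f : V →ₗ[ZMod p] W), Function.Injective f → obj W → obj V
  map_id : ∀ (V : FDVec p) (h : Function.Injective (LinearMap.id : V →ₗ[ZMod p] V))
      (x : obj V), map LinearMap.id h x = x
  map_comp : ∀ {V W X : FDVec p} (f : V →ₗ[ZMod p] W) (hf : Function.Injective f)
      (g : W →ₗ[ZMod p] X) (hg : Function.Injective g)
      (hgf : Function.Injective (g ∘ₗ f)) (x : obj X),
      map (g ∘ₗ f) hgf x = map f hf (map g hg x)

/-- A groupoid whose objects are the pairs `(U, i)` with `U` a subspace of `W i`,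
and whose morphisms are linear isomorphisms between such subspaces. -/
structure SubGroupoid {ι : Type} (W : ι → FDVec p) where
  mor : ∀ (i j : ι) (U : Submodule (ZMod p) (W i)) (U' : Submodule (ZMod p) (W j)),
    Set (↥U ≃ₗ[ZMod p] ↥U')
  id_mem : ∀ i U, LinearEquiv.refl (ZMod p) ↥U ∈ mor i i U U
  comp_mem : ∀ (i j k : ι) (U : Submodule (ZMod p) (W i)) (U' : Submodule (ZMod p) (W j))
      (U'' : Submodule (ZMod p) (W k)) (α : ↥U ≃ₗ[ZMod p] ↥U')
      (β : ↥U' ≃ₗ[ZMod p] ↥U''),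
      α ∈ mor i j U U' → β ∈ mor j k U' U'' → (α.trans β) ∈ mor i k U U''
  inv_mem : ∀ (i j : ι) (U : Submodule (ZMod p) (W i)) (U' : Submodule (ZMod p) (W j))
      (α : ↥U ≃ₗ[ZMod p] ↥U'),
      α ∈ mor i j U U' → α.symm ∈ mor j i U' U

section Restriction

variable {Wi Wj : FDVec p} {U : Submodule (ZMod p) Wi} {U' : Submodule (ZMod p) Wj}

/-- The restriction of `α : U ≃ U'` to a subspace `M ≤ U`, as a map to the ambient space. -/
def restrictMap (α : ↥U ≃ₗ[ZMod p] ↥U') {M : Submodule (ZMod p) Wi}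
    (hMU : M ≤ U) : ↥M →ₗ[ZMod p] Wj :=
  U'.subtype ∘ₗ (α.toLinearMap) ∘ₗ (Submodule.inclusion hMU)

theorem restrictMap_injective (α : ↥U ≃ₗ[ZMod p] ↥U')
    {M : Submodule (ZMod p) Wi} (hMU : M ≤ U) :
    Function.Injective (restrictMap α hMU) := by
  intro a b hab
  have h1 : α (Submodule.inclusion hMU a) = α (Submodule.inclusion hMU b) := Subtype.ext hab
  have h2 := α.injective h1
  have h3 := congrArg Subtype.val h2
  exact Subtype.ext h3

/-- The image `α(M)` of a subspace `M ≤ U` under `α : U ≃ U'`. -/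
def restrictImg (α : ↥U ≃ₗ[ZMod p] ↥U') {M : Submodule (ZMod p) Wi}
    (hMU : M ≤ U) : Submodule (ZMod p) Wj :=
  LinearMap.range (restrictMap α hMU)

/-- The restriction-corestriction `α_M : M ≃ α(M)` of `α : U ≃ U'` to `M ≤ U`. -/
noncomputable def restrictEquiv (α : ↥U ≃ₗ[ZMod p] ↥U')
    {M : Submodule (ZMod p) Wi} (hMU : M ≤ U) :
    ↥M ≃ₗ[ZMod p] ↥(restrictImg α hMU) :=
  LinearEquiv.ofInjective _ (restrictMap_injective α hMU)

end Restriction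

/-- The restriction property of a groupoid on subspaces. -/
def SubGroupoid.HasRestriction {ι : Type} {W : ι → FDVec p} (G : SubGroupoid W) : Prop :=
  ∀ (i j : ι) (U : Submodule (ZMod p) (W i)) (U' : Submodule (ZMod p) (W j))
    (α : ↥U ≃ₗ[ZMod p] ↥U'), α ∈ G.mor i j U U' →
    ∀ (M : Submodule (ZMod p) (W i)) (hMU : M ≤ U),
      restrictEquiv α hMU ∈ G.mor i j M (restrictImg α hMU)

/-- An element of `⊔_{i} Hom_{𝒱I}(V, W i)`. -/
def InjHom (V : FDVec p) {ι : Type} (W : ι → FDVec p) : Type :=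
  Σ i : ι, {f : V →ₗ[ZMod p] W i // Function.Injective f}

/-- The relation `∼_𝒢` on `⊔_i Hom_{𝒱I}(V, W i)`. -/
def SubGroupoid.Rel {ι : Type} {W : ι → FDVec p} (G : SubGroupoid W) (V : FDVec p)
    (x y : InjHom V W) : Prop :=
  ∃ α ∈ G.mor x.1 y.1 (LinearMap.range x.2.1) (LinearMap.range y.2.1),
    ∀ v : V, ((α (x.2.1.rangeRestrict v) : ↥(LinearMap.range y.2.1)) : W y.1) = y.2.1 v

/-- A generating family of a presheaf `F` on `𝒱I`: a natural surjection
`q : ⊔_i Hom_{𝒱I}(−, W i) → F`. -/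
structure GenFamily {ι : Type} (W : ι → FDVec p) (F : VIPresheaf p) where
  q : ∀ (V : FDVec p) (i : ι) (f : V →ₗ[ZMod p] W i), Function.Injective f → F.obj V
  natural : ∀ (T V : FDVec p) (β : T →ₗ[ZMod p] V) (hβ : Function.Injective β)
      (i : ι) (f : V →ₗ[ZMod p] W i) (hf : Function.Injective f)
      (hfβ : Function.Injective (f ∘ₗ β)),
      q T i (f ∘ₗ β) hfβ = F.map β hβ (q V i f hf)
  surjective : ∀ (V : FDVec p) (x : F.obj V), ∃ i f hf, q V i f hf = x

/-- `φ_i = q(id_{W i})`. -/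
def GenFamily.phi {ι : Type} {W : ι → FDVec p} {F : VIPresheaf p} (Q : GenFamily W F)
    (i : ι) : F.obj (W i) :=
  Q.q (W i) i LinearMap.id (linearMap_id_injective _)

/-- The morphisms of the groupoid `𝒢_{(F,q)}`: isomorphisms `α : U ≃ U'` with
`α^* ι_{U'}^* φ_j = ι_U^* φ_i`. -/
def GenFamily.mor {ι : Type} {W : ι → FDVec p} {F : VIPresheaf p} (Q : GenFamily W F)
    (i j : ι) (U : Submodule (ZMod p) (W i)) (U' : Submodule (ZMod p) (W j)) :
    Set (↥U ≃ₗ[ZMod p] ↥U') :=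
  {α | F.map (V := subFD U) (W := subFD U') α.toLinearMap (equiv_toLinearMap_injective α)
        (F.map (V := subFD U') (W := W j) U'.subtype U'.injective_subtype (Q.phi j))
      = F.map (V := subFD U) (W := W i) U.subtype U.injective_subtype (Q.phi i)}

/-- The relation `∼_{𝒢_{(F,q)}}`. -/
def GenFamily.GRel {ι : Type} {W : ι → FDVec p} {F : VIPresheaf p} (Q : GenFamily W F)
    (V : FDVec p) (x y : InjHom V W) : Prop :=
  ∃ α ∈ Q.mor x.1 y.1 (LinearMap.range x.2.1) (LinearMap.range y.2.1),
    ∀ v : V, ((α (x.2.1.rangeRestrict v) : ↥(LinearMap.range y.2.1)) : W y.1) = y.2.1 v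

/-- `x ∈ F_i(V)`, where `F_i ⊆ F` is the image of `Hom_{𝒱I}(−, W i)` under `q`. -/
def GenFamily.memComponent {ι : Type} {W : ι → FDVec p} {F : VIPresheaf p}
    (Q : GenFamily W F) (i : ι) (V : FDVec p) (x : F.obj V) : Prop :=
  ∃ f hf, Q.q V i f hf = x

/-- Minimality of a generating family: `F_i ⊄ F_j` for `i ≠ j`. -/
def GenFamily.Minimal {ι : Type} {W : ι → FDVec p} {F : VIPresheaf p}
    (Q : GenFamily W F) : Prop :=
  ∀ i j : ι, i ≠ j →
    ¬ (∀ (V : FDVec p) (x : F.obj V), Q.memComponent i V x → Q.memComponent j V x)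

/-- A class in `𝐁(V, W)`, represented canonically by its "glue" subspace
`G = {(ν m, −ω m) : m ∈ M} ⊆ V × W`.  The two conditions express the injectivity
of `ν` and of `ω` respectively. -/
structure Corr (p : ℕ) [Fact p.Prime] (V W : FDVec p) where
  carrier : Submodule (ZMod p) (↥V × ↥W)
  inj_left : ∀ m ∈ carrier, Prod.fst m = 0 → m = 0
  inj_right : ∀ m ∈ carrier, Prod.snd m = 0 → m = 0

/-- The pushout `V ⊕_{ν,ω} W` of a class of `𝐁(V,W)`. -/
abbrev Corr.po {V W : FDVec p} (c : Corr p V W) : FDVec p :=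
  FDVec.of p ((↥V × ↥W) ⧸ c.carrier)

/-- The canonical injection `ι_V : V → V ⊕_{ν,ω} W`. -/
def Corr.inl {V W : FDVec p} (c : Corr p V W) : V →ₗ[ZMod p] c.po :=
  c.carrier.mkQ ∘ₗ LinearMap.inl (ZMod p) ↥V ↥W

/-- The canonical injection `ι_W : W → V ⊕_{ν,ω} W`. -/
def Corr.inr {V W : FDVec p} (c : Corr p V W) : W →ₗ[ZMod p] c.po :=
  c.carrier.mkQ ∘ₗ LinearMap.inr (ZMod p) ↥V ↥W

theorem Corr.inl_injective {V W : FDVec p} (c : Corr p V W) :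
    Function.Injective c.inl := by
  intro a b hab
  have h : (Submodule.Quotient.mk ((a, 0) : ↥V × ↥W) : (↥V × ↥W) ⧸ c.carrier)
      = Submodule.Quotient.mk (b, 0) := hab
  have hmem : ((a, 0) : ↥V × ↥W) - (b, 0) ∈ c.carrier := by
    rwa [Submodule.Quotient.eq] at h
  have h2 := c.inj_right _ hmem (by simp)
  have h3 := congrArg Prod.fst h2
  simpa [sub_eq_zero] using h3

theorem Corr.inr_injective {V W : FDVec p} (c : Corr p V W) :
    Function.Injective c.inr := by
  intro a b hab
  have h : (Submodule.Quotient.mk ((0, a) : ↥V × ↥W) : (↥V × ↥W) ⧸ c.carrier)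
      = Submodule.Quotient.mk (0, b) := hab
  have hmem : ((0, a) : ↥V × ↥W) - (0, b) ∈ c.carrier := by
    rwa [Submodule.Quotient.eq] at h
  have h2 := c.inj_left _ hmem (by simp)
  have h3 := congrArg Prod.snd h2
  simpa [sub_eq_zero] using h3

/-- The fibre `σ_{(V,x)}F(W)` of `σ_V F(W) = ⊔_{𝐁(V,W)} F(V ⊕_{ν,ω} W)` over `x ∈ F(V)`. -/
def CentralFib (F : VIPresheaf p) (V : FDVec p) (x : F.obj V) (W : FDVec p) : Type :=
  Σ c : Corr p V W,
    {b : F.obj c.po // F.map (V := V) (W := c.po) c.inl c.inl_injective b = x}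

/-- The map `ρ_{F,(V,x)} : σ_{(V,x)}F(W) → F(W)`, sending `b` to `ι_W^* b`. -/
def centralMap (F : VIPresheaf p) (V : FDVec p) (x : F.obj V) (W : FDVec p) :
    CentralFib F V x W → F.obj W :=
  fun s => F.map (V := W) (W := Sigma.fst s |>.po) s.1.inr s.1.inr_injective s.2.1

/-- `(V, x)` is central for `F` if `ρ_{F,(V,x)}` is an isomorphism of presheaves. -/
def VIPresheaf.IsCentral (F : VIPresheaf p) (V : FDVec p) (x : F.obj V) : Prop :=
  ∀ W : FDVec p, Function.Bijective (centralMap F V x W)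

/-- The class of `𝐁(V, U)` associated with a pair of injections `δ : V → W`, `ε : U → W`:
its glue subspace is `ker(δ + ε) ⊆ V × U`. -/
def kerCorr {V U W : FDVec p} (δ : V →ₗ[ZMod p] W) (ε : U →ₗ[ZMod p] W)
    (hδ : Function.Injective δ) (hε : Function.Injective ε) : Corr p V U where
  carrier := LinearMap.ker (δ.coprod ε)
  inj_left := by
    intro m hm h1
    have hk : δ m.1 + ε m.2 = 0 := by simpa [LinearMap.mem_ker] using hm
    rw [h1] at hk
    simp only [map_zero, zero_add] at hk
    have h2 : m.2 = 0 := hε (by simpa using hk)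
    exact Prod.ext h1 h2
  inj_right := by
    intro m hm h2
    have hk : δ m.1 + ε m.2 = 0 := by simpa [LinearMap.mem_ker] using hm
    rw [h2] at hk
    simp only [map_zero, add_zero] at hk
    have h1 : m.1 = 0 := hδ (by simpa using hk)
    exact Prod.ext h1 h2

/-- The isomorphism `ε ↑ δ : V ⊕_{ν,μ} U ≃ δ(V) + ε(U)` of the first isomorphism theorem. -/
noncomputable def upArrow {V U W : FDVec p} (δ : V →ₗ[ZMod p] W) (ε : U →ₗ[ZMod p] W) :
    ((↥V × ↥U) ⧸ LinearMap.ker (δ.coprod ε)) ≃ₗ[ZMod p]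
      ↥(LinearMap.range δ ⊔ LinearMap.range ε : Submodule (ZMod p) W) :=
  (δ.coprod ε).quotKerEquivRange ≪≫ₗ LinearEquiv.ofEq _ _ (LinearMap.range_coprod δ ε)

/-- The class `[T, id_T, α] ∈ 𝐁(V, T)` associated with an injection `α : T → V`. -/
def idCorr {V T : FDVec p} (α : T →ₗ[ZMod p] V) (hα : Function.Injective α) :
    Corr p V T where
  carrier := LinearMap.range (α.prod (-(LinearMap.id : T →ₗ[ZMod p] T)))
  inj_left := by
    rintro m ⟨t, rfl⟩ h1
    simp only [LinearMap.prod_apply, Pi.prod, LinearMap.neg_apply, LinearMap.id_apply] at h1 ⊢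
    have ht : t = 0 := hα (by simpa using h1)
    simp [ht]
  inj_right := by
    rintro m ⟨t, rfl⟩ h2
    simp only [LinearMap.prod_apply, Pi.prod, LinearMap.neg_apply, LinearMap.id_apply] at h2 ⊢
    have ht : t = 0 := by simpa [neg_eq_zero] using h2
    simp [ht]

theorem VIPresheaf.map_equiv_injective (F : VIPresheaf p) {A B : FDVec p}
    (e : A ≃ₗ[ZMod p] B) : Function.Injective (F.map e.toLinearMap e.injective) := by
  refine Function.LeftInverse.injective (g := F.map e.symm.toLinearMap e.symm.injective)
    fun x => ?_
  have hid : e.toLinearMap ∘ₗ e.symm.toLinearMap = LinearMap.id := by ext; simp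
  have hinj : Function.Injective (e.toLinearMap ∘ₗ e.symm.toLinearMap) :=
    comp_injective _ _ e.symm.injective e.injective
  rw [← F.map_comp _ _ _ _ hinj]
  simp only [hid, F.map_id]

/-- The corestriction of an injective linear map to its image, as an isomorphism. -/
noncomputable def rangeEquiv {V W : FDVec p} (f : V →ₗ[ZMod p] W) (hf : Function.Injective f) :
    V ≃ₗ[ZMod p] subFD (LinearMap.range f) :=
  LinearEquiv.ofInjective f hf

theorem VIPresheaf.map_eq_map_rangeEquiv (F : VIPresheaf p) {V W : FDVec p}
    (f : V →ₗ[ZMod p] W) (hf : Function.Injective f) (x : F.obj W) :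
    F.map f hf x = F.map (rangeEquiv f hf).toLinearMap (rangeEquiv f hf).injective
      (F.map (V := subFD (LinearMap.range f)) (LinearMap.range f).subtype
        (LinearMap.range f).injective_subtype x) :=
  F.map_comp (rangeEquiv f hf).toLinearMap (rangeEquiv f hf).injective
    (X := W) (W := subFD (LinearMap.range f)) (LinearMap.range f).subtype
    (LinearMap.range f).injective_subtype hf x

/-- An isomorphism `α` of images with `α ∘ f̃ = g̃` is a morphism of `𝒢_{(F,q)}` if and only if
`f^* φ_i = g^* φ_j`. -/
theorem GenFamily.mem_mor_range_iff {ι : Type} {W : ι → FDVec p} {F : VIPresheaf p}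
    (Q : GenFamily W F) {V : FDVec p} {i j : ι} {f : V →ₗ[ZMod p] W i} {g : V →ₗ[ZMod p] W j}
    (hf : Function.Injective f) (hg : Function.Injective g)
    (α : LinearMap.range f ≃ₗ[ZMod p] LinearMap.range g)
    (hα : ∀ v : V, ((α (f.rangeRestrict v) : LinearMap.range g) : W j) = g v) :
    α ∈ Q.mor i j (LinearMap.range f) (LinearMap.range g) ↔
      F.map f hf (Q.phi i) = F.map g hg (Q.phi j) := by
  have hcomp : α.toLinearMap ∘ₗ (rangeEquiv f hf).toLinearMap
      = (rangeEquiv g hg).toLinearMap :=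
    LinearMap.ext fun v => Subtype.ext (hα v)
  have hinj : Function.Injective (α.toLinearMap ∘ₗ (rangeEquiv f hf).toLinearMap) :=
    α.injective.comp (rangeEquiv f hf).injective
  have key := F.map_comp (rangeEquiv f hf).toLinearMap (rangeEquiv f hf).injective
    (W := subFD (LinearMap.range f)) (X := subFD (LinearMap.range g))
    α.toLinearMap α.injective hinj
    (F.map (V := subFD (LinearMap.range g)) (LinearMap.range g).subtype
      (LinearMap.range g).injective_subtype (Q.phi j))
  simp only [hcomp] at key
  rw [F.map_eq_map_rangeEquiv f hf, F.map_eq_map_rangeEquiv g hg, key,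
    (F.map_equiv_injective (rangeEquiv f hf)).eq_iff]
  exact eq_comm

theorem GenFamily.map_phi {ι : Type} {W : ι → FDVec p} {F : VIPresheaf p}
    (Q : GenFamily W F) {V : FDVec p} {i : ι} (f : V →ₗ[ZMod p] W i)
    (hf : Function.Injective f) : F.map f hf (Q.phi i) = Q.q V i f hf :=
  (Q.natural V (W i) f hf i LinearMap.id (linearMap_id_injective _) hf).symm

/-- Let `(F, q_F)` be an object of `_{(W_i)}Set^{(𝒱I)ᵒᵖ}`.  The map
sending the class `[ε]_{𝒢_{(F,q_F)}}` of `ε ∈ Hom_{𝒱I}(V, W_i)` to `ε^* φ_i ∈ F(V)` is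
well defined and a bijection from `⊔_i Hom_{𝒱I}(V, W_i)/∼_{𝒢_{(F,q_F)}}` onto `F(V)`,
naturally in `V`; so `F ≅ ⊔_i Hom_{𝒱I}(−, W_i)/∼_{𝒢_{(F,q_F)}}` compatibly with the
surjections from `⊔_i Hom_{𝒱I}(−, W_i)`.  (Well-definedness, injectivity on classes,
surjectivity and naturality are stated separately.) -/
theorem statement_1 {p : ℕ} [Fact p.Prime] {ι : Type} (W : ι → FDVec p)
    (F : VIPresheaf p) (Q : GenFamily W F) (V : FDVec p) :
    (∀ x y : InjHom V W, Q.GRel V x y →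
        F.map x.2.1 x.2.2 (Q.phi x.1) = F.map y.2.1 y.2.2 (Q.phi y.1)) ∧
    (∀ x y : InjHom V W,
        F.map x.2.1 x.2.2 (Q.phi x.1) = F.map y.2.1 y.2.2 (Q.phi y.1) → Q.GRel V x y) ∧
    (∀ z : F.obj V, ∃ x : InjHom V W, F.map x.2.1 x.2.2 (Q.phi x.1) = z) ∧
    (∀ (T : FDVec p) (β : T →ₗ[ZMod p] V) (hβ : Function.Injective β) (x : InjHom V W),
        F.map (x.2.1 ∘ₗ β) (comp_injective β x.2.1 hβ x.2.2) (Q.phi x.1)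
          = F.map β hβ (F.map x.2.1 x.2.2 (Q.phi x.1))) := by
  refine ⟨?_, ?_, ?_, ?_⟩
  · rintro x y ⟨α, hmem, hα⟩
    exact (Q.mem_mor_range_iff x.2.2 y.2.2 α hα).mp hmem
  · intro x y hxy
    let α : LinearMap.range x.2.1 ≃ₗ[ZMod p] LinearMap.range y.2.1 :=
      (LinearEquiv.ofInjective x.2.1 x.2.2).symm ≪≫ₗ LinearEquiv.ofInjective y.2.1 y.2.2
    have hα : ∀ v : V, ((α (x.2.1.rangeRestrict v) : LinearMap.range y.2.1) : W y.1)
        = y.2.1 v := fun v =>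
      congrArg y.2.1 ((LinearEquiv.ofInjective x.2.1 x.2.2).symm_apply_apply v)
    exact ⟨α, (Q.mem_mor_range_iff x.2.2 y.2.2 α hα).mpr hxy, hα⟩
  · intro z
    obtain ⟨i, f, hf, hz⟩ := Q.surjective V z
    exact ⟨⟨i, f, hf⟩, (Q.map_phi f hf).trans hz⟩
  · intro T β hβ x
    exact F.map_comp β hβ x.2.1 x.2.2 _ _

end Paper
end

section
/- Let 𝒢 be a groupoid whose objects are the pairs (U,i) with U a subspace of W_i, whose morphisms are linear isomorphisms, and which has the restriction property. Then V ↦ ⊔_{i∈I} Hom_{𝒱I}(V,W_i)/∼_𝒢 defines a presheaf on 𝒱I; that is, if ζ : V → W_i and ρ : V → W_j are injective linear maps with ζ ∼_𝒢 ρ, and β : T → V is an injective linear map, then ζ∘β ∼_𝒢 ρ∘β. Moreover, this presheaf is connected (its value at the zero vector space is a singleton) if and only if for all (i,j) ∈ I², the unique linear map 0 → 0 belongs to 𝒢(0 ⊆ W_i, 0 ⊆ W_j). -/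
set_option maxHeartbeats 1000000

namespace Paper

variable {p : ℕ} [Fact p.Prime]

theorem SubGroupoid.mor_congr {ι : Type} {W : ι → FDVec p} (G : SubGroupoid W) {i j : ι}
    {U M : Submodule (ZMod p) (W i)} {U' M' : Submodule (ZMod p) (W j)} (hU : U = M)
    (hU' : U' = M') {α : ↥U ≃ₗ[ZMod p] ↥U'} (hα : α ∈ G.mor i j U U')
    (γ : ↥M ≃ₗ[ZMod p] ↥M')
    (h : ∀ m (hm : m ∈ U) (hm' : m ∈ M), (α ⟨m, hm⟩ : W j) = γ ⟨m, hm'⟩) :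
    γ ∈ G.mor i j M M' := by
  subst hU hU'
  have : α = γ := LinearEquiv.ext fun m => Subtype.ext (h m.1 m.2 m.2)
  exact this ▸ hα

/-- The relation `∼_𝒢` is compatible with precomposition by injective linear maps. -/
theorem SubGroupoid.Rel.comp {ι : Type} {W : ι → FDVec p} {G : SubGroupoid W}
    (hG : G.HasRestriction) {T V : FDVec p} (β : T →ₗ[ZMod p] V) (hβ : Function.Injective β)
    {ζ ρ : InjHom V W} (h : G.Rel V ζ ρ) :
    G.Rel T ⟨ζ.1, ζ.2.1 ∘ₗ β, comp_injective β ζ.2.1 hβ ζ.2.2⟩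
      ⟨ρ.1, ρ.2.1 ∘ₗ β, comp_injective β ρ.2.1 hβ ρ.2.2⟩ := by
  obtain ⟨i, f, hf⟩ := ζ
  obtain ⟨j, g, hg⟩ := ρ
  obtain ⟨α, hα, hfg⟩ := h
  have hle : LinearMap.range (f ∘ₗ β) ≤ LinearMap.range f := LinearMap.range_comp_le_range β f
  have hr : ∀ t : T, restrictMap α hle ((f ∘ₗ β).rangeRestrict t) = g (β t) :=
    fun t => hfg (β t)
  have himg : restrictImg α hle = LinearMap.range (g ∘ₗ β) := by
    ext y
    constructor
    · rintro ⟨⟨_, t, rfl⟩, rfl⟩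
      exact ⟨t, (hr t).symm⟩
    · rintro ⟨t, rfl⟩
      exact ⟨(f ∘ₗ β).rangeRestrict t, hr t⟩
  exact ⟨(restrictEquiv α hle).trans (LinearEquiv.ofEq _ _ himg),
    G.mor_congr rfl himg (hG _ _ _ _ α hα _ hle) _ fun _ _ _ => rfl, hr⟩

/-- On the zero space, `∼_𝒢` is the total relation if and only if `𝒢` contains all the
isomorphisms between zero subspaces. -/
theorem SubGroupoid.forall_rel_iff {ι : Type} {W : ι → FDVec p} (G : SubGroupoid W)
    {V₀ : FDVec p} (hV : ∀ v : ↥V₀, v = 0) :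
    (∀ ζ ρ : InjHom V₀ W, G.Rel V₀ ζ ρ) ↔
      ∀ i j : ι,
        ∀ α : ↥(⊥ : Submodule (ZMod p) (W i)) ≃ₗ[ZMod p] ↥(⊥ : Submodule (ZMod p) (W j)),
          α ∈ G.mor i j ⊥ ⊥ := by
  have hinj : ∀ i, Function.Injective (0 : V₀ →ₗ[ZMod p] W i) :=
    fun i a b _ => (hV a).trans (hV b).symm
  constructor
  · intro h i j γ
    obtain ⟨α, hα, -⟩ := h ⟨i, 0, hinj i⟩ ⟨j, 0, hinj j⟩
    refine G.mor_congr LinearMap.range_zero LinearMap.range_zero hα γ fun m hm hm' => ?_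
    obtain rfl := (Submodule.mem_bot _).1 hm'
    exact (congrArg Subtype.val (map_zero α)).trans (congrArg Subtype.val (map_zero γ)).symm
  · rintro h ⟨i, f, hf⟩ ⟨j, g, hg⟩
    obtain rfl : f = 0 := LinearMap.ext fun v => by rw [hV v, map_zero, map_zero]
    obtain rfl : g = 0 := LinearMap.ext fun v => by rw [hV v, map_zero, map_zero]
    let e := (LinearEquiv.ofInjective _ hf).symm.trans (LinearEquiv.ofInjective _ hg)
    refine ⟨e, G.mor_congr LinearMap.range_zero.symm LinearMap.range_zero.symm
      (h i j 0) e fun m hm hm' => ?_, fun v => ?_⟩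
    · obtain rfl := (Submodule.mem_bot _).1 hm
      exact (congrArg Subtype.val (map_zero e)).symm
    · rw [hV v, map_zero, map_zero, map_zero]
      rfl

/-- Let `𝒢` be a groupoid on subspaces of the `W_i` with the restriction
property.  Then `V ↦ ⊔_i Hom_{𝒱I}(V, W_i)/∼_𝒢` defines a presheaf on `𝒱I`: the relation
`∼_𝒢` is compatible with precomposition by injective linear maps.  Moreover, this presheaf
is connected (its value at the zero vector space is a singleton) if and only if for all
`(i,j) ∈ I²` the unique linear map `0 → 0` belongs to `𝒢(0 ⊆ W_i, 0 ⊆ W_j)`. -/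
theorem statement_3 {p : ℕ} [Fact p.Prime] {ι : Type} [Nonempty ι] (W : ι → FDVec p)
    (G : SubGroupoid W) (hG : G.HasRestriction) :
    (∀ (T V : FDVec p) (β : T →ₗ[ZMod p] V) (hβ : Function.Injective β)
        (ζ ρ : InjHom V W), G.Rel V ζ ρ →
        G.Rel T ⟨ζ.1, ζ.2.1 ∘ₗ β, comp_injective β ζ.2.1 hβ ζ.2.2⟩
                ⟨ρ.1, ρ.2.1 ∘ₗ β, comp_injective β ρ.2.1 hβ ρ.2.2⟩) ∧
    (∀ V₀ : FDVec p, (∀ v : ↥V₀, v = 0) →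
      ((Nonempty (InjHom V₀ W) ∧ ∀ ζ ρ : InjHom V₀ W, G.Rel V₀ ζ ρ) ↔
        (∀ i j : ι,
          ∀ α : ↥(⊥ : Submodule (ZMod p) (W i)) ≃ₗ[ZMod p] ↥(⊥ : Submodule (ZMod p) (W j)),
            α ∈ G.mor i j ⊥ ⊥))) := by
  refine ⟨fun T V β hβ ζ ρ h => h.comp hG β hβ, fun V₀ hV => ?_⟩
  rw [← G.forall_rel_iff hV]
  exact and_iff_right ⟨⟨Classical.arbitrary ι, 0, fun a b _ => (hV a).trans (hV b).symm⟩⟩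

end Paper
end

section
/- Let V, W, T be finite-dimensional 𝔽_p-vector spaces, let [M,ν,ω] ∈ 𝐁(V,W) and let [M',g,τ] ∈ 𝐁(V⊕_{ν,ω}W, T). Then there exist a class [N,ω',τ'] ∈ 𝐁(W,T), a class [N',ν',g'] ∈ 𝐁(V, W⊕_{ω',τ'}T), and an isomorphism ζ : (V⊕_{ν,ω}W)⊕_{g,τ}T → V⊕_{ν',g'}(W⊕_{ω',τ'}T) such that the composites of ζ with the canonical injections of V, W and T into (V⊕_{ν,ω}W)⊕_{g,τ}T are equal to the canonical injections of V, W and T into V⊕_{ν',g'}(W⊕_{ω',τ'}T). -/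
set_option maxHeartbeats 1000000

namespace Paper

variable {p : ℕ} [Fact p.Prime]

/-- The map `V ⊕_{ν,μ} U → W` induced by injections `δ : V → W`, `ε : U → W`, for the class
`kerCorr δ ε`. -/
def kerCorrDesc {V U W : FDVec p} (δ : V →ₗ[ZMod p] W) (ε : U →ₗ[ZMod p] W)
    (hδ : Function.Injective δ) (hε : Function.Injective ε) :
    (kerCorr δ ε hδ hε).po →ₗ[ZMod p] W :=
  (LinearMap.ker (δ.coprod ε)).liftQ (δ.coprod ε) le_rfl

theorem kerCorrDesc_injective {V U W : FDVec p} (δ : V →ₗ[ZMod p] W) (ε : U →ₗ[ZMod p] W)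
    (hδ : Function.Injective δ) (hε : Function.Injective ε) :
    Function.Injective (kerCorrDesc δ ε hδ hε) :=
  LinearMap.ker_eq_bot.mp (Submodule.ker_liftQ_eq_bot _ _ le_rfl le_rfl)

theorem kerCorrDesc_inl {V U W : FDVec p} (δ : V →ₗ[ZMod p] W) (ε : U →ₗ[ZMod p] W)
    (hδ : Function.Injective δ) (hε : Function.Injective ε) (v : V) :
    kerCorrDesc δ ε hδ hε ((kerCorr δ ε hδ hε).inl v) = δ v := by
  change δ v + ε 0 = δ v
  simp

theorem kerCorrDesc_inr {V U W : FDVec p} (δ : V →ₗ[ZMod p] W) (ε : U →ₗ[ZMod p] W)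
    (hδ : Function.Injective δ) (hε : Function.Injective ε) (u : U) :
    kerCorrDesc δ ε hδ hε ((kerCorr δ ε hδ hε).inr u) = ε u := by
  change δ 0 + ε u = ε u
  simp

theorem Corr.exists_inl_add_inr {V W : FDVec p} (c : Corr p V W) (x : c.po) :
    ∃ v w, c.inl v + c.inr w = x := by
  obtain ⟨⟨v, w⟩, rfl⟩ := Submodule.mkQ_surjective _ x
  refine ⟨v, w, ?_⟩
  simp only [Corr.inl, Corr.inr, LinearMap.comp_apply, ← map_add]
  simp

/-- **Statement 6.** (Associativity of amalgamated sums.)  Given a class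
`[M,ν,ω] ∈ 𝐁(V,W)` (represented by `c₁`) and a class `[M',g,τ] ∈ 𝐁(V ⊕_{ν,ω} W, T)`
(represented by `c₂`), there exist a class `[N,ω',τ'] ∈ 𝐁(W,T)` (represented by `c₃`),
a class `[N',ν',g'] ∈ 𝐁(V, W ⊕_{ω',τ'} T)` (represented by `c₄`) and an isomorphism
`ζ : (V ⊕_{ν,ω} W) ⊕_{g,τ} T ≃ V ⊕_{ν',g'} (W ⊕_{ω',τ'} T)` compatible with the
canonical injections of `V`, `W` and `T`. -/
theorem statement_6 {p : ℕ} [Fact p.Prime] (V W T : FDVec p)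
    (c₁ : Corr p V W) (c₂ : Corr p c₁.po T) :
    ∃ (c₃ : Corr p W T) (c₄ : Corr p V c₃.po) (ζ : ↥c₂.po ≃ₗ[ZMod p] ↥c₄.po),
      (∀ v : ↥V, ζ (c₂.inl (c₁.inl v)) = c₄.inl v) ∧
      (∀ w : ↥W, ζ (c₂.inl (c₁.inr w)) = c₄.inr (c₃.inl w)) ∧
      (∀ t : ↥T, ζ (c₂.inr t) = c₄.inr (c₃.inr t)) := by
  have hV := comp_injective c₁.inl c₂.inl c₁.inl_injective c₂.inl_injective
  have hW := comp_injective c₁.inr c₂.inl c₁.inr_injective c₂.inl_injective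
  let c₃ : Corr p W T := kerCorr (W := c₂.po) (c₂.inl ∘ₗ c₁.inr) c₂.inr hW c₂.inr_injective
  let g : c₃.po →ₗ[ZMod p] c₂.po := kerCorrDesc (W := c₂.po) _ _ hW c₂.inr_injective
  have hg : Function.Injective g := kerCorrDesc_injective _ _ _ _
  have g_inl (w : W) : g (c₃.inl w) = c₂.inl (c₁.inr w) := kerCorrDesc_inl _ _ _ _ w
  have g_inr (t : T) : g (c₃.inr t) = c₂.inr t := kerCorrDesc_inr _ _ _ _ t
  let c₄ : Corr p V c₃.po := kerCorr (W := c₂.po) (c₂.inl ∘ₗ c₁.inl) g hV hg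
  let f : c₄.po →ₗ[ZMod p] c₂.po := kerCorrDesc (W := c₂.po) _ _ hV hg
  have hf : Function.Injective f := kerCorrDesc_injective _ _ _ _
  have f_inl (v : V) : f (c₄.inl v) = c₂.inl (c₁.inl v) := kerCorrDesc_inl _ _ _ _ v
  have f_inr (y : c₃.po) : f (c₄.inr y) = g y := kerCorrDesc_inr _ _ _ _ y
  have f_surj : Function.Surjective f := by
    intro x
    obtain ⟨y, t, rfl⟩ := c₂.exists_inl_add_inr x
    obtain ⟨v, w, rfl⟩ := c₁.exists_inl_add_inr y
    refine ⟨c₄.inl v + c₄.inr (c₃.inl w + c₃.inr t), ?_⟩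
    rw [map_add, f_inl, f_inr, map_add, g_inl, g_inr, map_add, add_assoc]
  let e := LinearEquiv.ofBijective f ⟨hf, f_surj⟩
  refine ⟨c₃, c₄, e.symm, fun v => ?_, fun w => ?_, fun t => ?_⟩ <;>
    rw [LinearEquiv.symm_apply_eq]
  · exact (f_inl v).symm
  · exact ((f_inr _).trans (g_inl w)).symm
  · exact ((f_inr _).trans (g_inr t)).symm

end Paper
end

section
/- Let F be a presheaf on 𝒱I and let (V,x) and (T,y) be central elements of F. Then there exist a unique class [M,ν,τ] ∈ 𝐁(V,T) and a unique z ∈ F(V⊕_{ν,τ}T) such that ι_V^* z = x and ι_T^* z = y; moreover the pair (V⊕_{ν,τ}T, z) is central for F. -/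
set_option maxHeartbeats 1000000

namespace Paper

variable {p : ℕ} [Fact p.Prime]

namespace VIPresheaf

variable (F : VIPresheaf p)

theorem map_congr {V W : FDVec p} {f g : V →ₗ[ZMod p] W} (hf : Function.Injective f)
    (hg : Function.Injective g) (h : f = g) (x : F.obj W) : F.map f hf x = F.map g hg x := by
  subst h
  rfl

theorem map_map {U V W : FDVec p} (f : U →ₗ[ZMod p] V) (hf : Function.Injective f)
    (g : V →ₗ[ZMod p] W) (hg : Function.Injective g) (x : F.obj W) :
    F.map f hf (F.map g hg x) = F.map (g ∘ₗ f) (comp_injective f g hf hg) x :=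
  (F.map_comp f hf g hg _ x).symm

end VIPresheaf

/-- The embedding `V ⊕_{ν,ω} U → W` induced by injections `δ : V → W` and `ε : U → W`. -/
def kerCorrLift {V U W : FDVec p} (δ : V →ₗ[ZMod p] W) (ε : U →ₗ[ZMod p] W)
    (hδ : Function.Injective δ) (hε : Function.Injective ε) :
    (kerCorr δ ε hδ hε).po →ₗ[ZMod p] W :=
  (LinearMap.ker (δ.coprod ε)).liftQ (δ.coprod ε) le_rfl

theorem kerCorrLift_injective {V U W : FDVec p} (δ : V →ₗ[ZMod p] W) (ε : U →ₗ[ZMod p] W)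
    (hδ : Function.Injective δ) (hε : Function.Injective ε) :
    Function.Injective (kerCorrLift δ ε hδ hε) :=
  LinearMap.ker_eq_bot.1 (Submodule.ker_liftQ_eq_bot _ _ _ le_rfl)

theorem kerCorrLift_comp_mkQ {V U W : FDVec p} (δ : V →ₗ[ZMod p] W) (ε : U →ₗ[ZMod p] W)
    (hδ : Function.Injective δ) (hε : Function.Injective ε) :
    kerCorrLift δ ε hδ hε ∘ₗ (kerCorr δ ε hδ hε).carrier.mkQ = δ.coprod ε :=
  Submodule.liftQ_mkQ _ _ _

theorem kerCorrLift_comp_inl {V U W : FDVec p} (δ : V →ₗ[ZMod p] W) (ε : U →ₗ[ZMod p] W)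
    (hδ : Function.Injective δ) (hε : Function.Injective ε) :
    kerCorrLift δ ε hδ hε ∘ₗ (kerCorr δ ε hδ hε).inl = δ := by
  rw [Corr.inl, ← LinearMap.comp_assoc, kerCorrLift_comp_mkQ, LinearMap.coprod_inl]

theorem kerCorrLift_comp_inr {V U W : FDVec p} (δ : V →ₗ[ZMod p] W) (ε : U →ₗ[ZMod p] W)
    (hδ : Function.Injective δ) (hε : Function.Injective ε) :
    kerCorrLift δ ε hδ hε ∘ₗ (kerCorr δ ε hδ hε).inr = ε := by
  rw [Corr.inr, ← LinearMap.comp_assoc, kerCorrLift_comp_mkQ, LinearMap.coprod_inr]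

/-- An element `z ∈ F(Z)` together with injections `δ : V → Z`, `ε : W → Z` restricts to an
element of `σ_{(V, δ^* z)}F(W)`. -/
def amalgamFib (F : VIPresheaf p) {V W Z : FDVec p} {x : F.obj V} (δ : V →ₗ[ZMod p] Z)
    (ε : W →ₗ[ZMod p] Z) (hδ : Function.Injective δ) (hε : Function.Injective ε) (z : F.obj Z)
    (hz : F.map δ hδ z = x) : CentralFib F V x W :=
  ⟨kerCorr δ ε hδ hε, F.map (kerCorrLift δ ε hδ hε) (kerCorrLift_injective δ ε hδ hε) z, by
    rw [F.map_map, ← hz]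
    exact F.map_congr _ _ (kerCorrLift_comp_inl δ ε hδ hε) z⟩

theorem centralMap_amalgamFib (F : VIPresheaf p) {V W Z : FDVec p} {x : F.obj V}
    (δ : V →ₗ[ZMod p] Z) (ε : W →ₗ[ZMod p] Z) (hδ : Function.Injective δ)
    (hε : Function.Injective ε) (z : F.obj Z) (hz : F.map δ hδ z = x) :
    centralMap F V x W (amalgamFib F δ ε hδ hε z hz) = F.map ε hε z := by
  unfold centralMap amalgamFib
  rw [F.map_map]
  exact F.map_congr _ _ (kerCorrLift_comp_inr δ ε hδ hε) z

/-- Two amalgams of a central element `(V, x)` with the same element of `F(W)` share a common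
subobject generated by `V` and `W`. -/
theorem VIPresheaf.IsCentral.exists_common {F : VIPresheaf p} {V : FDVec p} {x : F.obj V}
    (hx : F.IsCentral V x) {W Z Z' : FDVec p}
    (δ : V →ₗ[ZMod p] Z) (ε : W →ₗ[ZMod p] Z) (hδ : Function.Injective δ)
    (hε : Function.Injective ε) (z : F.obj Z) (hz : F.map δ hδ z = x)
    (δ' : V →ₗ[ZMod p] Z') (ε' : W →ₗ[ZMod p] Z') (hδ' : Function.Injective δ')
    (hε' : Function.Injective ε') (z' : F.obj Z') (hz' : F.map δ' hδ' z' = x)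
    (hzz' : F.map ε hε z = F.map ε' hε' z') :
    ∃ (A : FDVec p) (i : V →ₗ[ZMod p] A) (j : W →ₗ[ZMod p] A)
      (α : A →ₗ[ZMod p] Z) (hα : Function.Injective α)
      (α' : A →ₗ[ZMod p] Z') (hα' : Function.Injective α'),
      α ∘ₗ i = δ ∧ α ∘ₗ j = ε ∧ α' ∘ₗ i = δ' ∧ α' ∘ₗ j = ε' ∧
      F.map α hα z = F.map α' hα' z' := by
  have key : amalgamFib F δ ε hδ hε z hz = amalgamFib F δ' ε' hδ' hε' z' hz' :=
    (hx W).1 (by rw [centralMap_amalgamFib, centralMap_amalgamFib, hzz'])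
  have gen : ∀ s s' : CentralFib F V x W, s = s' →
      ∀ (α : s.1.po →ₗ[ZMod p] Z) (hα : Function.Injective α)
      (α' : s'.1.po →ₗ[ZMod p] Z') (hα' : Function.Injective α'),
      F.map α hα z = s.2.1 → F.map α' hα' z' = s'.2.1 →
      α ∘ₗ s.1.inl = δ → α ∘ₗ s.1.inr = ε → α' ∘ₗ s'.1.inl = δ' → α' ∘ₗ s'.1.inr = ε' →
      ∃ (A : FDVec p) (i : V →ₗ[ZMod p] A) (j : W →ₗ[ZMod p] A)
        (α : A →ₗ[ZMod p] Z) (hα : Function.Injective α)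
        (α' : A →ₗ[ZMod p] Z') (hα' : Function.Injective α'),
        α ∘ₗ i = δ ∧ α ∘ₗ j = ε ∧ α' ∘ₗ i = δ' ∧ α' ∘ₗ j = ε' ∧
        F.map α hα z = F.map α' hα' z' := by
    rintro s _ rfl α hα α' hα' h h' h₁ h₂ h₃ h₄
    exact ⟨s.1.po, s.1.inl, s.1.inr, α, hα, α', hα', h₁, h₂, h₃, h₄, h.trans h'.symm⟩
  exact gen _ _ key _ (kerCorrLift_injective δ ε hδ hε) _ (kerCorrLift_injective δ' ε' hδ' hε')
    rfl rfl (kerCorrLift_comp_inl δ ε hδ hε) (kerCorrLift_comp_inr δ ε hδ hε)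
    (kerCorrLift_comp_inl δ' ε' hδ' hε') (kerCorrLift_comp_inr δ' ε' hδ' hε')

theorem Corr.inl_coprod_inr {V W : FDVec p} (c : Corr p V W) :
    c.inl.coprod c.inr = c.carrier.mkQ :=
  LinearMap.prod_ext (LinearMap.coprod_inl _ _) (LinearMap.coprod_inr _ _)

/-- A map into `V ⊕_{ν,ω} W` through which both canonical injections factor is surjective. -/
theorem Corr.surjective_of_factor {V W A : FDVec p} (c : Corr p V W) (α : A →ₗ[ZMod p] c.po)
    (hl : ∀ v, ∃ a, α a = c.inl v) (hr : ∀ w, ∃ a, α a = c.inr w) : Function.Surjective α := by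
  intro q
  obtain ⟨⟨v, w⟩, rfl⟩ := c.carrier.mkQ_surjective q
  obtain ⟨a, ha⟩ := hl v
  obtain ⟨b, hb⟩ := hr w
  refine ⟨a + b, ?_⟩
  rw [map_add, ha, hb, ← c.inl_coprod_inr, LinearMap.coprod_apply]

theorem Corr.hom_ext {V W Z : FDVec p} {c : Corr p V W} {f g : c.po →ₗ[ZMod p] Z}
    (hl : f ∘ₗ c.inl = g ∘ₗ c.inl) (hr : f ∘ₗ c.inr = g ∘ₗ c.inr) : f = g :=
  Submodule.linearMap_qext _ (LinearMap.prod_ext hl hr)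

theorem CentralFib.eq_of_map {F : VIPresheaf p} {V : FDVec p} {x : F.obj V} {W : FDVec p}
    (s s' : CentralFib F V x W) (e : s.1.po →ₗ[ZMod p] s'.1.po) (he : Function.Injective e)
    (hl : e ∘ₗ s.1.inl = s'.1.inl) (hr : e ∘ₗ s.1.inr = s'.1.inr)
    (hb : F.map e he s'.2.1 = s.2.1) : s = s' := by
  obtain ⟨c, b, hbx⟩ := s
  obtain ⟨c', b', hbx'⟩ := s'
  have hq : e ∘ₗ c.carrier.mkQ = c'.carrier.mkQ := by
    rw [← c.inl_coprod_inr, ← c'.inl_coprod_inr, LinearMap.comp_coprod]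
    exact congrArg₂ _ hl hr
  have hc : c.carrier = c'.carrier := by
    rw [← c'.carrier.ker_mkQ, ← hq, LinearMap.ker_comp_of_ker_eq_bot _ (LinearMap.ker_eq_bot.2 he),
      Submodule.ker_mkQ]
  obtain rfl : c = c' := by
    cases c
    cases c'
    cases hc
    rfl
  have hid : e = LinearMap.id := Corr.hom_ext hl hr
  obtain rfl : b = b' := by
    rw [← F.map_id c.po (linearMap_id_injective _) b']
    exact hb.symm.trans (F.map_congr _ _ hid b')
  rfl

theorem map_symm_eq (F : VIPresheaf p) {A Z : FDVec p} (e : A ≃ₗ[ZMod p] Z)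
    {a : F.obj A} {z : F.obj Z} (h : F.map e.toLinearMap e.injective z = a) :
    F.map e.symm.toLinearMap e.symm.injective a = z := by
  rw [← h, F.map_map, ← F.map_id Z (linearMap_id_injective _) z, F.map_map]
  exact F.map_congr _ _ (by ext; simp) z

/-- If an injection `α` into `Z` is bijective, then `Z` embeds compatibly wherever its source
does. -/
theorem exists_extension (F : VIPresheaf p) {A Z Z' : FDVec p} (α : A →ₗ[ZMod p] Z)
    (hα : Function.Injective α) (hs : Function.Surjective α) (α' : A →ₗ[ZMod p] Z')
    (hα' : Function.Injective α') {z : F.obj Z} {z' : F.obj Z'}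
    (h : F.map α hα z = F.map α' hα' z') :
    ∃ (e : Z →ₗ[ZMod p] Z') (he : Function.Injective e), e ∘ₗ α = α' ∧ F.map e he z' = z := by
  let a : A ≃ₗ[ZMod p] Z := LinearEquiv.ofBijective α ⟨hα, hs⟩
  refine ⟨α' ∘ₗ a.symm.toLinearMap, comp_injective _ _ a.symm.injective hα', ?_, ?_⟩
  · ext v
    exact congrArg α' (a.symm_apply_apply v)
  · rw [← F.map_map _ a.symm.injective _ hα']
    exact map_symm_eq F a h

theorem VIPresheaf.IsCentral.amalgam {F : VIPresheaf p} {V T : FDVec p}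
    {x : F.obj V} {y : F.obj T} (hx : F.IsCentral V x) (hy : F.IsCentral T y)
    (c : Corr p V T) (z : F.obj c.po) (hzx : F.map c.inl c.inl_injective z = x)
    (hzy : F.map c.inr c.inr_injective z = y) : F.IsCentral c.po z := by
  intro W
  constructor
  · intro s s' hss'
    obtain ⟨A, i, j, α, hα, α', hα', h₁, h₂, h₃, h₄, h₅⟩ := hx.exists_common
      (s.1.inl ∘ₗ c.inl) s.1.inr (comp_injective _ _ c.inl_injective s.1.inl_injective)
      s.1.inr_injective s.2.1 (by rw [← F.map_map _ c.inl_injective _ s.1.inl_injective, s.2.2, hzx])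
      (s'.1.inl ∘ₗ c.inl) s'.1.inr (comp_injective _ _ c.inl_injective s'.1.inl_injective)
      s'.1.inr_injective s'.2.1
      (by rw [← F.map_map _ c.inl_injective _ s'.1.inl_injective, s'.2.2, hzx]) hss'
    obtain ⟨B, k, l, β, hβ, β', hβ', h₆, h₇, h₈, h₉, h₀⟩ := hy.exists_common
      (s.1.inl ∘ₗ c.inr) α (comp_injective _ _ c.inr_injective s.1.inl_injective)
      hα s.2.1 (by rw [← F.map_map _ c.inr_injective _ s.1.inl_injective, s.2.2, hzy])
      (s'.1.inl ∘ₗ c.inr) α' (comp_injective _ _ c.inr_injective s'.1.inl_injective)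
      hα' s'.2.1
      (by rw [← F.map_map _ c.inr_injective _ s'.1.inl_injective, s'.2.2, hzy]) h₅
    have hsurj : Function.Surjective β := by
      refine s.1.surjective_of_factor β (fun q => ?_) fun w => ⟨l (j w), ?_⟩
      · obtain ⟨⟨v, t⟩, rfl⟩ := c.carrier.mkQ_surjective q
        refine ⟨l (i v) + k t, ?_⟩
        have e₁ := LinearMap.congr_fun h₁ v
        rw [← h₇] at e₁
        have e₂ := LinearMap.congr_fun h₆ t
        simp only [LinearMap.comp_apply] at e₁ e₂
        rw [map_add, e₁, e₂, ← c.inl_coprod_inr, LinearMap.coprod_apply, map_add]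
      · have e₁ := LinearMap.congr_fun h₂ w
        rwa [← h₇] at e₁
    obtain ⟨e, he, heβ, heb⟩ := exists_extension F β hβ hsurj β' hβ' h₀
    refine CentralFib.eq_of_map s s' e he (Corr.hom_ext ?_ ?_) ?_ heb
    · rw [LinearMap.comp_assoc, ← h₁, ← h₃, ← h₇, ← h₉, ← heβ]
      rfl
    · rw [LinearMap.comp_assoc, ← h₆, ← h₈, ← heβ]
      rfl
    · rw [← h₂, ← h₄, ← h₇, ← h₉, ← heβ]
      rfl
  · intro w
    obtain ⟨⟨c₁, a, hax⟩, haw⟩ := (hx W).2 w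
    obtain ⟨⟨c₂, b, hby⟩, hba⟩ := (hy c₁.po).2 a
    change F.map c₁.inr c₁.inr_injective a = w at haw
    change F.map c₂.inr c₂.inr_injective b = a at hba
    have hbx : F.map (c₂.inr ∘ₗ c₁.inl)
        (comp_injective _ _ c₁.inl_injective c₂.inr_injective) b = x := by
      rw [← F.map_map _ c₁.inl_injective _ c₂.inr_injective, hba, hax]
    obtain ⟨A, i, j, α, hα, α', hα', h₁, h₂, -, -, h₅⟩ := hx.exists_common
      c.inl c.inr c.inl_injective c.inr_injective z hzx
      (c₂.inr ∘ₗ c₁.inl) c₂.inl (comp_injective _ _ c₁.inl_injective c₂.inr_injective)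
      c₂.inl_injective b hbx (hzy.trans hby.symm)
    obtain ⟨e, he, -, heb⟩ := exists_extension F α hα
      (c.surjective_of_factor α (fun v => ⟨i v, LinearMap.congr_fun h₁ v⟩)
        fun t => ⟨j t, LinearMap.congr_fun h₂ t⟩) α' hα' h₅
    refine ⟨amalgamFib F e (c₂.inr ∘ₗ c₁.inr) he
      (comp_injective _ _ c₁.inr_injective c₂.inr_injective) b heb, ?_⟩
    rw [centralMap_amalgamFib, ← F.map_map _ c₁.inr_injective _ c₂.inr_injective, hba, haw]

/-- **Statement 10.** If `(V,x)` and `(T,y)` are central elements of `F`, then there exist a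
unique class `[M,ν,τ] ∈ 𝐁(V,T)` and a unique `z ∈ F(V ⊕_{ν,τ} T)` with `ι_V^* z = x`
and `ι_T^* z = y`; moreover the pair `(V ⊕_{ν,τ} T, z)` is central for `F`. -/
theorem statement_10 {p : ℕ} [Fact p.Prime] (F : VIPresheaf p) (V T : FDVec p)
    (x : F.obj V) (y : F.obj T) (hx : F.IsCentral V x) (hy : F.IsCentral T y) :
    (∃! s : Σ c : Corr p V T, F.obj c.po,
        F.map s.1.inl s.1.inl_injective s.2 = x ∧
        F.map s.1.inr s.1.inr_injective s.2 = y) ∧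
    (∀ s : Σ c : Corr p V T, F.obj c.po,
        (F.map s.1.inl s.1.inl_injective s.2 = x ∧
         F.map s.1.inr s.1.inr_injective s.2 = y) →
        F.IsCentral s.1.po s.2) := by
  refine ⟨?_, fun s hs => hx.amalgam hy s.1 s.2 hs.1 hs.2⟩
  obtain ⟨⟨c, z, hzx⟩, hzy⟩ := (hx T).2 y
  refine ⟨⟨c, z⟩, ⟨hzx, hzy⟩, ?_⟩
  rintro ⟨c', z'⟩ ⟨hzx', hzy'⟩
  have h : (⟨c', z', hzx'⟩ : CentralFib F V x T) = ⟨c, z, hzx⟩ := (hx T).1 (hzy'.trans hzy.symm)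
  exact congrArg (fun s : CentralFib F V x T => (⟨s.1, s.2.1⟩ : Σ c : Corr p V T, F.obj c.po)) h

end Paper
end

section
/- Let F be a presheaf on 𝒱I such that F has at least one central element and such that F(V) = ∅ whenever dim(V) is greater than some fixed integer d. Then there exists a central element (C,c) of F, unique up to isomorphism, such that a pair (V,x) with x ∈ F(V) is central for F if and only if there exists an injective linear map α : V → C with x = α^* c. -/
set_option maxHeartbeats 1000000

namespace Paper

variable {p : ℕ} [Fact p.Prime]

theorem VIPresheaf.map_congr_s10 (F : VIPresheaf p) {V W : FDVec p} {f g : V →ₗ[ZMod p] W}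
    (h : f = g) (hf : Function.Injective f) (hg : Function.Injective g) (x : F.obj W) :
    F.map f hf x = F.map g hg x := by
  subst h; rfl

/-- An element `z ∈ F(Z)` restricting to `x` and `y` along injections `V → Z ← W`. -/
structure Cospan (F : VIPresheaf p) {V W : FDVec p} (x : F.obj V) (y : F.obj W) : Type 1 where
  apex : FDVec p
  left : V →ₗ[ZMod p] apex
  right : W →ₗ[ZMod p] apex
  left_injective : Function.Injective left
  right_injective : Function.Injective right
  elt : F.obj apex
  map_left : F.map left left_injective elt = x
  map_right : F.map right right_injective elt = y

namespace Cospan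

variable {F : VIPresheaf p} {V W : FDVec p} {x : F.obj V} {y : F.obj W}

/-- The two legs jointly span the apex. -/
def JointlySurjective (A : Cospan F x y) : Prop :=
  ∀ z : A.apex, ∃ v w, A.left v + A.right w = z

/-- There is a morphism of cospans from `A` to `B`. -/
def MapsTo (A B : Cospan F x y) : Prop :=
  ∃ (φ : A.apex →ₗ[ZMod p] B.apex) (hφ : Function.Injective φ),
    (∀ v, φ (A.left v) = B.left v) ∧ (∀ w, φ (A.right w) = B.right w) ∧
      F.map φ hφ B.elt = A.elt

/-- The cospan formed by the canonical injections into a pushout. -/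
def ofCorr (c : Corr p V W) (b : F.obj c.po) (hx : F.map (W := c.po) c.inl c.inl_injective b = x)
    (hy : F.map (W := c.po) c.inr c.inr_injective b = y) : Cospan F x y :=
  ⟨c.po, c.inl, c.inr, c.inl_injective, c.inr_injective, b, hx, hy⟩

theorem inl_add_inr (c : Corr p V W) (v : V) (w : W) :
    c.inl v + c.inr w = c.carrier.mkQ (v, w) := by
  change c.carrier.mkQ (v, 0) + c.carrier.mkQ (0, w) = _
  rw [← map_add]
  simp

theorem ofCorr_jointlySurjective (c : Corr p V W) (b : F.obj c.po)
    (hx : F.map (W := c.po) c.inl c.inl_injective b = x)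
    (hy : F.map (W := c.po) c.inr c.inr_injective b = y) :
    (ofCorr c b hx hy).JointlySurjective := by
  intro z
  obtain ⟨⟨v, w⟩, rfl⟩ := c.carrier.mkQ_surjective z
  exact ⟨v, w, inl_add_inr c v w⟩

/-- Every cospan receives an injection from a pushout. -/
theorem exists_corr (A : Cospan F x y) :
    ∃ (c : Corr p V W) (b : F.obj c.po)
      (hx : F.map (W := c.po) c.inl c.inl_injective b = x)
      (hy : F.map (W := c.po) c.inr c.inr_injective b = y), (ofCorr c b hx hy).MapsTo A := by
  let c : Corr p V W := kerCorr A.left A.right A.left_injective A.right_injective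
  let f : c.po →ₗ[ZMod p] A.apex := c.carrier.liftQ (A.left.coprod A.right) le_rfl
  have hf : Function.Injective f :=
    LinearMap.ker_eq_bot.mp (Submodule.ker_liftQ_eq_bot _ _ _ le_rfl)
  have hl : ∀ v, f (c.inl v) = A.left v := fun v => by
    change A.left.coprod A.right (v, 0) = _
    simp
  have hr : ∀ w, f (c.inr w) = A.right w := fun w => by
    change A.left.coprod A.right (0, w) = _
    simp
  refine ⟨c, F.map (V := c.po) f hf A.elt, ?_, ?_, f, hf, hl, hr, rfl⟩
  · rw [← F.map_comp (W := c.po) c.inl c.inl_injective f hf (hf.comp c.inl_injective)]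
    exact (F.map_congr_s10 (LinearMap.ext hl) _ A.left_injective _).trans A.map_left
  · rw [← F.map_comp (W := c.po) c.inr c.inr_injective f hf (hf.comp c.inr_injective)]
    exact (F.map_congr_s10 (LinearMap.ext hr) _ A.right_injective _).trans A.map_right

theorem exists_jointlySurjective (h : Nonempty (Cospan F x y)) :
    ∃ A : Cospan F x y, A.JointlySurjective := by
  obtain ⟨A⟩ := h
  obtain ⟨c, b, hx, hy, -⟩ := A.exists_corr
  exact ⟨_, ofCorr_jointlySurjective c b hx hy⟩

theorem MapsTo.trans {A B C : Cospan F x y} (hAB : A.MapsTo B) (hBC : B.MapsTo C) :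
    A.MapsTo C := by
  obtain ⟨f, hf, hfl, hfr, hfe⟩ := hAB
  obtain ⟨g, hg, hgl, hgr, hge⟩ := hBC
  refine ⟨g ∘ₗ f, hg.comp hf, fun v => ?_, fun w => ?_, ?_⟩
  · simp [hfl, hgl]
  · simp [hfr, hgr]
  · rw [F.map_comp f hf g hg, hge, hfe]

theorem MapsTo.symm {A B : Cospan F x y} (hAB : A.MapsTo B) (hB : B.JointlySurjective) :
    B.MapsTo A := by
  obtain ⟨f, hf, hfl, hfr, hfe⟩ := hAB
  have hs : Function.Surjective f := fun z => by
    obtain ⟨v, w, rfl⟩ := hB z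
    exact ⟨A.left v + A.right w, by rw [map_add, hfl, hfr]⟩
  let e : A.apex ≃ₗ[ZMod p] B.apex := LinearEquiv.ofBijective f ⟨hf, hs⟩
  refine ⟨e.symm.toLinearMap, e.symm.injective, fun v => ?_, fun w => ?_, ?_⟩
  · exact (e.symm_apply_eq).mpr (hfl v).symm
  · exact (e.symm_apply_eq).mpr (hfr w).symm
  · rw [← hfe, ← F.map_comp e.symm.toLinearMap e.symm.injective f hf (hf.comp e.symm.injective)]
    refine (F.map_congr_s10 (LinearMap.ext fun z => ?_) _ Function.injective_id _).trans
      (F.map_id _ Function.injective_id _)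
    exact e.apply_symm_apply z

/-- Precomposition of the legs with injections. -/
def precomp {V' W' : FDVec p} {x' : F.obj V'} {y' : F.obj W'} (A : Cospan F x y)
    (f : V' →ₗ[ZMod p] V) (hf : Function.Injective f) (hx : F.map f hf x = x')
    (g : W' →ₗ[ZMod p] W) (hg : Function.Injective g) (hy : F.map g hg y = y') :
    Cospan F x' y' where
  apex := A.apex
  left := A.left ∘ₗ f
  right := A.right ∘ₗ g
  left_injective := A.left_injective.comp hf
  right_injective := A.right_injective.comp hg
  elt := A.elt
  map_left := by rw [F.map_comp f hf A.left A.left_injective, A.map_left, hx]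
  map_right := by rw [F.map_comp g hg A.right A.right_injective, A.map_right, hy]

end Cospan

open Cospan

/-- Centrality in terms of cospans: jointly surjective cospans exist and are initial. -/
theorem isCentral_iff (F : VIPresheaf p) {V : FDVec p} (x : F.obj V) :
    F.IsCentral V x ↔ ∀ (W : FDVec p) (y : F.obj W), Nonempty (Cospan F x y) ∧
      ∀ A B : Cospan F x y, A.JointlySurjective → A.MapsTo B := by
  constructor
  · intro h W y
    constructor
    · obtain ⟨⟨c, b, hb⟩, hs⟩ := (h W).2 y
      exact ⟨ofCorr c b hb hs⟩
    · intro A B hA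
      obtain ⟨c, b, hx, hy, hcA⟩ := A.exists_corr
      obtain ⟨c', b', hx', hy', hcB⟩ := B.exists_corr
      have hEq : (⟨c, b, hx⟩ : CentralFib F V x W) = ⟨c', b', hx'⟩ :=
        (h W).1 (hy.trans hy'.symm)
      cases hEq
      exact (hcA.symm hA).trans hcB
  · intro h W
    constructor
    · rintro ⟨⟨G, hl, hr⟩, b, hb⟩ ⟨⟨G', hl', hr'⟩, b', hb'⟩ hs
      obtain ⟨φ, hφ, hφl, hφr, hφe⟩ := (h W _).2 (ofCorr ⟨G, hl, hr⟩ b hb rfl)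
        (ofCorr ⟨G', hl', hr'⟩ b' hb' hs.symm) (ofCorr_jointlySurjective _ _ _ _)
      have hmk : ∀ v w, φ (G.mkQ (v, w)) = G'.mkQ (v, w) := fun v w => by
        rw [← inl_add_inr ⟨G, hl, hr⟩, ← inl_add_inr ⟨G', hl', hr'⟩]
        exact (map_add φ _ _).trans (congrArg₂ _ (hφl v) (hφr w))
      have hG : G = G' := by
        ext ⟨v, w⟩
        rw [← Submodule.Quotient.mk_eq_zero G, ← Submodule.Quotient.mk_eq_zero G']
        change G.mkQ (v, w) = 0 ↔ G'.mkQ (v, w) = 0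
        rw [← hmk]
        exact (map_eq_zero_iff φ hφ).symm
      subst hG
      have hid : φ = LinearMap.id := LinearMap.ext fun z => by
        obtain ⟨⟨v, w⟩, rfl⟩ := G.mkQ_surjective z
        exact hmk v w
      subst hid
      have hbb : b' = b := (F.map_id _ hφ b').symm.trans hφe
      subst hbb
      rfl
    · intro y
      obtain ⟨A⟩ := (h W y).1
      obtain ⟨c, b, hx, hy, -⟩ := A.exists_corr
      exact ⟨⟨c, b, hx⟩, hy⟩

/-- If `f` and `g` have the same codomain, `g` is injective and `range f ≤ range g`, then `f`
factors through `g`. -/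
theorem exists_factor {X Y Z : FDVec p} (f : X →ₗ[ZMod p] Y) (g : Z →ₗ[ZMod p] Y)
    (hg : Function.Injective g) (h : ∀ a, ∃ b, g b = f a) :
    ∃ φ : X →ₗ[ZMod p] Z, ∀ a, g (φ a) = f a := by
  let e := LinearEquiv.ofInjective g hg
  refine ⟨e.symm.toLinearMap ∘ₗ f.codRestrict (LinearMap.range g) h, fun a => ?_⟩
  exact congrArg Subtype.val (e.apply_symm_apply (f.codRestrict (LinearMap.range g) h a))

/-- In any cospan from a central `x` to some `z` the two copies of a restriction `α^* x` agree. -/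
theorem VIPresheaf.IsCentral.left_eq_right {F : VIPresheaf p} {V U Z : FDVec p} {x : F.obj V}
    (hx : F.IsCentral V x) {α : U →ₗ[ZMod p] V} {hα : Function.Injective α} {z : F.obj Z}
    (T : Cospan F x z) (i : U →ₗ[ZMod p] Z) (hi : Function.Injective i)
    (hz : F.map i hi z = F.map α hα x) (u : U) : T.left (α u) = T.right (i u) := by
  let A : Cospan F x (F.map α hα x) :=
    ⟨V, LinearMap.id, α, Function.injective_id, hα, x, F.map_id _ _ _, rfl⟩
  obtain ⟨φ, -, hl, hr, -⟩ := ((isCentral_iff F x).mp hx U (F.map α hα x)).2 A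
    (T.precomp LinearMap.id Function.injective_id (F.map_id _ _ _) i hi hz)
    fun v => ⟨v, 0, by simp [A]⟩
  exact (hl (α u)).symm.trans (hr u)

/-- Restrictions of central elements are central. -/
theorem VIPresheaf.IsCentral.map {F : VIPresheaf p} {V U : FDVec p} {x : F.obj V}
    (hx : F.IsCentral V x) (α : U →ₗ[ZMod p] V) (hα : Function.Injective α) :
    F.IsCentral U (F.map α hα x) := by
  have hx' := (isCentral_iff F x).mp hx
  refine (isCentral_iff F _).mpr fun W y => ⟨?_, fun A B hA => ?_⟩
  · obtain ⟨A⟩ := (hx' W y).1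
    exact ⟨A.precomp α hα rfl LinearMap.id Function.injective_id (F.map_id _ _ _)⟩
  · obtain ⟨S, hS⟩ := exists_jointlySurjective (hx' _ A.elt).1
    obtain ⟨T⟩ := (hx' _ B.elt).1
    have hSα := hx.left_eq_right S A.left A.left_injective A.map_left
    have hTα := hx.left_eq_right T B.left B.left_injective B.map_left
    obtain ⟨ψ, hψ, hl, hr, he⟩ : ∃ (ψ : S.apex →ₗ[ZMod p] T.apex) (hψ : Function.Injective ψ),
        (∀ v, ψ (S.left v) = T.left v) ∧
          (∀ w, ψ (S.right (A.right w)) = T.right (B.right w)) ∧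
            F.map ψ hψ T.elt = S.elt := (hx' W y).2
      (S.precomp LinearMap.id Function.injective_id (F.map_id _ _ _)
        A.right A.right_injective A.map_right)
      (T.precomp LinearMap.id Function.injective_id (F.map_id _ _ _)
        B.right B.right_injective B.map_right) (fun s => by
          obtain ⟨v, a, rfl⟩ := hS s
          obtain ⟨u, w, rfl⟩ := hA a
          refine ⟨v + α u, w, ?_⟩
          change S.left (v + α u) + S.right (A.right w) = _
          rw [map_add, map_add, hSα, add_assoc])
    have hleft : ∀ u, ψ (S.right (A.left u)) = T.right (B.left u) := fun u => by
      rw [← hSα, hl, hTα]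
    have hψS : Function.Injective (ψ ∘ₗ S.right) := hψ.comp S.right_injective
    obtain ⟨φ, hφ⟩ := exists_factor (X := A.apex) (Y := T.apex) (Z := B.apex)
      (ψ ∘ₗ S.right) T.right T.right_injective (fun a => by
        obtain ⟨u, w, rfl⟩ := hA a
        refine ⟨B.left u + B.right w, ?_⟩
        rw [map_add, map_add, ← hleft, ← hr]
        rfl)
    have hφi : Function.Injective φ := fun a b hab =>
      hψS ((hφ a).symm.trans ((congrArg T.right hab).trans (hφ b)))
    refine ⟨φ, hφi, fun u => T.right_injective ((hφ _).trans (hleft u)),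
      fun w => T.right_injective ((hφ _).trans (hr w)), ?_⟩
    have h1 : F.map (T.right ∘ₗ φ) (T.right_injective.comp hφi) T.elt =
        F.map (ψ ∘ₗ S.right) hψS T.elt := F.map_congr_s10 (LinearMap.ext hφ) _ _ _
    rw [F.map_comp φ hφi T.right T.right_injective, T.map_right] at h1
    rw [h1]
    exact (F.map_comp S.right S.right_injective ψ hψ hψS T.elt).trans
      ((congrArg _ he).trans S.map_right)

/-- The jointly surjective amalgam of two central elements is central. -/
theorem Cospan.JointlySurjective.isCentral {F : VIPresheaf p} {V W : FDVec p} {x : F.obj V}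
    {y : F.obj W} {E : Cospan F x y} (hE : E.JointlySurjective) (hx : F.IsCentral V x)
    (hy : F.IsCentral W y) : F.IsCentral E.apex E.elt := by
  have hx' := (isCentral_iff F x).mp hx
  have hy' := (isCentral_iff F y).mp hy
  refine (isCentral_iff F _).mpr fun U z => ?_
  obtain ⟨S, hS⟩ := exists_jointlySurjective (hy' U z).1
  refine ⟨?_, fun A B hA => ?_⟩
  · obtain ⟨T⟩ := (hx' _ S.elt).1
    obtain ⟨φ, hφ, -, -, he⟩ := (hx' _ y).2 E
      (T.precomp LinearMap.id Function.injective_id (F.map_id _ _ _)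
        S.left S.left_injective S.map_left) hE
    let R := T.precomp LinearMap.id Function.injective_id (F.map_id _ _ _)
      S.right S.right_injective S.map_right
    exact ⟨T.apex, φ, R.right, hφ, R.right_injective, T.elt, he, R.map_right⟩
  · have key : ∀ A : Cospan F E.elt z, ∃ (s : S.apex →ₗ[ZMod p] A.apex)
        (hs : Function.Injective s), (∀ w, s (S.left w) = A.left (E.right w)) ∧
          (∀ u, s (S.right u) = A.right u) ∧ F.map s hs A.elt = S.elt := fun A =>
      (hy' U z).2 S (A.precomp E.right E.right_injective E.map_right
        LinearMap.id Function.injective_id (F.map_id _ _ _)) hS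
    obtain ⟨s, hs, hsl, hsr, hse⟩ := key A
    obtain ⟨t, ht, htl, htr, hte⟩ := key B
    let LA := A.precomp E.left E.left_injective E.map_left
      LinearMap.id Function.injective_id (F.map_id _ _ _)
    let LB := B.precomp E.left E.left_injective E.map_left
      LinearMap.id Function.injective_id (F.map_id _ _ _)
    obtain ⟨ψ, hψ, hl, hr, he⟩ := (hx' _ S.elt).2
      ⟨A.apex, LA.left, s, LA.left_injective, hs, A.elt, LA.map_left, hse⟩
      ⟨B.apex, LB.left, t, LB.left_injective, ht, B.elt, LB.map_left, hte⟩ (fun a => by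
        obtain ⟨e, u, rfl⟩ := hA a
        obtain ⟨v, w, rfl⟩ := hE e
        refine ⟨v, S.left w + S.right u, ?_⟩
        change A.left (E.left v) + s (S.left w + S.right u) = _
        rw [map_add, map_add, hsl, hsr, add_assoc])
    change ∀ v, ψ (A.left (E.left v)) = B.left (E.left v) at hl
    change ∀ a, ψ (s a) = t a at hr
    refine ⟨ψ, hψ, fun e => ?_, fun u => ?_, he⟩
    · obtain ⟨v, w, rfl⟩ := hE e
      rw [map_add, map_add, map_add, hl, ← hsl, hr, htl]
    · rw [← hsr, hr, htr]

/-- A central element of maximal dimension restricts to every central element. -/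
theorem VIPresheaf.IsCentral.exists_map_eq_of_maximal {F : VIPresheaf p} {C : FDVec p}
    {c : F.obj C} (hc : F.IsCentral C c)
    (hmax : ∀ (V : FDVec p) (x : F.obj V), F.IsCentral V x →
      Module.finrank (ZMod p) V ≤ Module.finrank (ZMod p) C)
    {V : FDVec p} {x : F.obj V} (hx : F.IsCentral V x) :
    ∃ (α : V →ₗ[ZMod p] C) (hα : Function.Injective α), x = F.map α hα c := by
  obtain ⟨E, hE⟩ := exists_jointlySurjective ((isCentral_iff F c).mp hc V x).1
  have hdim : Module.finrank (ZMod p) C = Module.finrank (ZMod p) E.apex :=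
    le_antisymm (LinearMap.finrank_le_finrank_of_injective E.left_injective)
      (hmax _ _ (hE.isCentral hc hx))
  have hsurj : Function.Surjective E.left :=
    (LinearMap.injective_iff_surjective_of_finrank_eq_finrank hdim).mp E.left_injective
  obtain ⟨α, hα⟩ := exists_factor E.right E.left E.left_injective fun v => hsurj _
  have hαi : Function.Injective α := fun a b hab =>
    E.right_injective (by rw [← hα, ← hα, hab])
  refine ⟨α, hαi, ?_⟩
  rw [← E.map_left, ← F.map_comp α hαi E.left E.left_injective
    (E.left_injective.comp hαi)]
  exact E.map_right.symm.trans (F.map_congr_s10 (LinearMap.ext hα).symm _ _ _)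

/-- **Statement 11.** If `F` has at least one central element and `F(V) = ∅` whenever
`dim V > d`, then there exists a central element `(C, c)`, unique up to isomorphism,
such that `(V, x)` is central for `F` iff there is an injective linear map `α : V → C`
with `x = α^* c`. -/
theorem statement_11 {p : ℕ} [Fact p.Prime] (F : VIPresheaf p) (d : ℕ)
    (hne : ∃ (V : FDVec p) (x : F.obj V), F.IsCentral V x)
    (hd : ∀ V : FDVec p, d < Module.finrank (ZMod p) V → IsEmpty (F.obj V)) :
    ∃ (C : FDVec p) (c : F.obj C),
      F.IsCentral C c ∧
      (∀ (V : FDVec p) (x : F.obj V), F.IsCentral V x ↔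
        ∃ (α : V →ₗ[ZMod p] C) (hα : Function.Injective α), x = F.map α hα c) ∧
      (∀ (C' : FDVec p) (c' : F.obj C'),
        (F.IsCentral C' c' ∧
          ∀ (V : FDVec p) (x : F.obj V), F.IsCentral V x ↔
            ∃ (α : V →ₗ[ZMod p] C') (hα : Function.Injective α), x = F.map α hα c') →
        ∃ (β : ↥C ≃ₗ[ZMod p] ↥C'),
          c = F.map β.toLinearMap (equiv_toLinearMap_injective β) c') := by
  have hbdd : BddAbove {n | ∃ (V : FDVec p) (x : F.obj V), F.IsCentral V x ∧
      Module.finrank (ZMod p) V = n} := by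
    refine ⟨d, ?_⟩
    rintro n ⟨V, x, -, rfl⟩
    by_contra! hn
    exact (hd V hn).false x
  obtain ⟨C, c, hc, hC⟩ := Nat.sSup_mem
    (by obtain ⟨V, x, hx⟩ := hne; exact ⟨_, V, x, hx, rfl⟩) hbdd
  have hmax : ∀ (V : FDVec p) (x : F.obj V), F.IsCentral V x →
      Module.finrank (ZMod p) V ≤ Module.finrank (ZMod p) C := fun V x hx => by
    rw [hC]
    exact le_csSup hbdd ⟨V, x, hx, rfl⟩
  refine ⟨C, c, hc, fun V x => ⟨fun hx => hc.exists_map_eq_of_maximal hmax hx, ?_⟩, ?_⟩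
  · rintro ⟨α, hα, rfl⟩
    exact hc.map α hα
  · rintro C' c' ⟨hc', h⟩
    obtain ⟨β, hβ, hβc⟩ := (h C c).mp hc
    have hdim : Module.finrank (ZMod p) C = Module.finrank (ZMod p) C' :=
      le_antisymm (LinearMap.finrank_le_finrank_of_injective hβ) (hmax C' c' hc')
    exact ⟨LinearEquiv.ofBijective β
      ⟨hβ, (LinearMap.injective_iff_surjective_of_finrank_eq_finrank hdim).mp hβ⟩, hβc⟩

end Paper
end
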